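/- arXiv:1611.03571 — 2 statements merged into one kernel-verified Lean document; each statement's English description precedes it below -/
import Mathlib

section
/- ζ(3) = ∫₀¹ log(1+t) · log(1+1/t) / t dt. -/
open MeasureTheory Real

theorem hasDerivAt_pow_mul_log_antideriv (n : ℕ) {x : ℝ} (hx : x ≠ 0) :
    HasDerivAt (fun x : ℝ =>
        x ^ (n + 1) / ((n : ℝ) + 1) ^ 3 - x ^ n * (x * log x) / ((n : ℝ) + 1) ^ 2)
      (-log x * x ^ n / ((n : ℝ) + 1)) x := by
  have hn : (n : ℝ) + 1 ≠ 0 := by positivity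
  have h1 : HasDerivAt (fun x : ℝ => x ^ (n + 1) * log x)
      (((n + 1 : ℕ) : ℝ) * x ^ n * log x + x ^ (n + 1) * x⁻¹) x :=
    (hasDerivAt_pow (n + 1) x).mul (hasDerivAt_log hx)
  have h2 := ((hasDerivAt_pow (n + 1) x).div_const (((n : ℝ) + 1) ^ 3)).sub
    (h1.div_const (((n : ℝ) + 1) ^ 2))
  convert! h2 using 1
  · funext y
    simp only [Pi.sub_apply]
    ring
  · push_cast
    field_simp
    ring

theorem continuous_pow_mul_log_antideriv (n : ℕ) :
    Continuous fun x : ℝ =>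
      x ^ (n + 1) / ((n : ℝ) + 1) ^ 3 - x ^ n * (x * log x) / ((n : ℝ) + 1) ^ 2 := by
  have := continuous_mul_log
  fun_prop

theorem neg_log_mul_pow_div_nonneg (n : ℕ) {x : ℝ} (hx : x ∈ Set.Ioo (0 : ℝ) 1) :
    0 ≤ -log x * x ^ n / ((n : ℝ) + 1) := by
  have := log_nonpos hx.1.le hx.2.le
  have := hx.1
  have : 0 ≤ -log x := by linarith
  positivity

theorem integrableOn_neg_log_mul_pow_div (n : ℕ) :
    IntegrableOn (fun x : ℝ => -log x * x ^ n / ((n : ℝ) + 1)) (Set.Ioc 0 1) :=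
  intervalIntegral.integrableOn_deriv_of_nonneg
    (continuous_pow_mul_log_antideriv n).continuousOn
    (fun _ hx => hasDerivAt_pow_mul_log_antideriv n hx.1.ne')
    (fun _ hx => neg_log_mul_pow_div_nonneg n hx)

theorem integral_neg_log_mul_pow_div (n : ℕ) :
    ∫ x in Set.Ioo (0 : ℝ) 1, -log x * x ^ n / ((n : ℝ) + 1) = 1 / ((n : ℝ) + 1) ^ 3 := by
  rw [← integral_Ioc_eq_integral_Ioo, ← intervalIntegral.integral_of_le zero_le_one,
    intervalIntegral.integral_eq_sub_of_hasDerivAt_of_le zero_le_one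
      (continuous_pow_mul_log_antideriv n).continuousOn
      (fun _ hx => hasDerivAt_pow_mul_log_antideriv n hx.1.ne')
      ((intervalIntegrable_iff_integrableOn_Ioc_of_le zero_le_one).2
        (integrableOn_neg_log_mul_pow_div n))]
  simp

theorem hasSum_neg_log_mul_pow_div {x : ℝ} (hx : x ∈ Set.Ioo (0 : ℝ) 1) :
    HasSum (fun n : ℕ => -log x * x ^ n / ((n : ℝ) + 1)) (log x * log (1 - x) / x) := by
  have hx0 : x ≠ 0 := hx.1.ne'
  have h := (hasSum_pow_div_log_of_abs_lt_one
    (abs_lt.2 ⟨by linarith [hx.1], hx.2⟩)).mul_left (-log x / x)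
  convert! h using 1
  · funext n
    field_simp
    ring
  · ring

theorem summable_one_div_nat_add_one_pow_three :
    Summable fun n : ℕ => 1 / ((n : ℝ) + 1) ^ 3 := by
  simpa using (summable_nat_add_iff 1).2 (Real.summable_one_div_nat_pow.2 (by norm_num : 1 < 3))

theorem tsum_eq_integral_log_mul_log_one_sub_div :
    (∑' n : ℕ, 1 / ((n : ℝ) + 1) ^ 3) =
      ∫ x in Set.Ioo (0 : ℝ) 1, log x * log (1 - x) / x := by
  have h := hasSum_integral_of_summable_integral_norm
    (μ := volume.restrict (Set.Ioo (0 : ℝ) 1))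
    (F := fun (n : ℕ) (x : ℝ) => -log x * x ^ n / ((n : ℝ) + 1))
    (fun n => (integrableOn_neg_log_mul_pow_div n).mono_set Set.Ioo_subset_Ioc_self) ?_
  · simp only [integral_neg_log_mul_pow_div] at h
    rw [h.tsum_eq]
    exact setIntegral_congr_fun measurableSet_Ioo
      fun x hx => (hasSum_neg_log_mul_pow_div hx).tsum_eq
  · refine summable_one_div_nat_add_one_pow_three.congr fun n => ?_
    rw [← integral_neg_log_mul_pow_div]
    exact setIntegral_congr_fun measurableSet_Ioo
      fun x hx => (norm_of_nonneg (neg_log_mul_pow_div_nonneg n hx)).symm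

theorem intervalIntegrable_log_mul_log_one_sub_div :
    IntervalIntegrable (fun x : ℝ => log x * log (1 - x) / x) volume 0 1 := by
  rw [intervalIntegrable_iff_integrableOn_Ioo_of_le zero_le_one]
  refine Integrable.of_integral_ne_zero ?_
  rw [← tsum_eq_integral_log_mul_log_one_sub_div]
  exact (summable_one_div_nat_add_one_pow_three.tsum_pos (fun n => by positivity) 0
    (by norm_num)).ne'

theorem image_inv_sub_one_Ioo :
    (fun x : ℝ => x⁻¹ - 1) '' Set.Ioo (1 / 2) 1 = Set.Ioo 0 1 := by
  ext t
  constructor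
  · rintro ⟨x, ⟨h1, h2⟩, rfl⟩
    have hx : 0 < x := by linarith
    have h3 : 1 < x⁻¹ := (one_lt_inv₀ hx).2 h2
    have h4 : x⁻¹ < 2 := by
      rw [inv_lt_comm₀ hx two_pos]
      linarith
    exact ⟨by dsimp only; linarith, by dsimp only; linarith⟩
  · rintro ⟨h1, h2⟩
    have ht : 0 < 1 + t := by linarith
    refine ⟨(1 + t)⁻¹, ⟨?_, ?_⟩, by simp⟩
    · rw [one_div, inv_lt_inv₀ two_pos ht]
      linarith
    · exact inv_lt_one_of_one_lt₀ (by linarith)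

theorem integral_log_one_add_mul_log_one_add_one_div_div :
    ∫ t in Set.Ioo (0 : ℝ) 1, log (1 + t) * log (1 + 1 / t) / t =
      ∫ x in Set.Ioo (1 / 2 : ℝ) 1,
        (log x * log (1 - x) / x + log (1 - x) * log (1 - (1 - x)) / (1 - x)) := by
  rw [← image_inv_sub_one_Ioo, integral_image_eq_integral_abs_deriv_smul
    (f' := fun x => -(x ^ 2)⁻¹) measurableSet_Ioo
    (fun x hx => ((hasDerivAt_inv (by linarith [hx.1])).sub_const 1).hasDerivWithinAt)
    (fun x _ y _ h => inv_injective (sub_left_injective h))]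
  refine setIntegral_congr_fun measurableSet_Ioo fun x ⟨h1, h2⟩ => ?_
  have hx : 0 < x := by linarith
  have hx' : 0 < 1 - x := by linarith
  have hx1 : x⁻¹ - 1 = (1 - x) / x := by field_simp
  have e1 : 1 + (x⁻¹ - 1) = x⁻¹ := by ring
  have e2 : 1 + 1 / (x⁻¹ - 1) = (1 - x)⁻¹ := by
    rw [hx1]
    field_simp
    ring
  simp only [e1, e2, log_inv, smul_eq_mul, abs_neg, abs_inv, abs_pow, sq_abs, sub_sub_cancel]
  rw [hx1]
  field_simp
  ring

theorem stmt17 :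
    (∑' n : ℕ, 1 / ((n : ℝ) + 1) ^ 3) =
      ∫ t in (0:ℝ)..1, Real.log (1 + t) * Real.log (1 + 1 / t) / t := by
  have hint := intervalIntegrable_log_mul_log_one_sub_div
  have hl : IntervalIntegrable (fun x : ℝ => log x * log (1 - x) / x) volume 0 (1 / 2) :=
    hint.mono_set (Set.uIcc_subset_uIcc_left (by norm_num [Set.mem_uIcc]))
  have hr : IntervalIntegrable (fun x : ℝ => log x * log (1 - x) / x) volume (1 / 2) 1 :=
    hint.mono_set (Set.uIcc_subset_uIcc_right (by norm_num [Set.mem_uIcc]))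
  have hl' := (hl.comp_sub_left 1).symm
  have hrefl := intervalIntegral.integral_comp_sub_left (a := 1 / 2) (b := 1)
    (fun x : ℝ => log x * log (1 - x) / x) 1
  norm_num only at hl' hrefl
  rw [intervalIntegral.integral_of_le zero_le_one, integral_Ioc_eq_integral_Ioo,
    integral_log_one_add_mul_log_one_add_one_div_div, ← integral_Ioc_eq_integral_Ioo,
    ← intervalIntegral.integral_of_le (by norm_num), intervalIntegral.integral_add hr hl',
    tsum_eq_integral_log_mul_log_one_sub_div, ← integral_Ioc_eq_integral_Ioo,
    ← intervalIntegral.integral_of_le zero_le_one, hrefl, add_comm,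
    intervalIntegral.integral_add_adjacent_intervals hl hr]
end

section
/- ∫₀¹ (arctan t)²/t dt = (π/2)·G - (7/8)·ζ(3), where G = ∑_{n=0}^∞ (-1)ⁿ/(2n+1)² is Catalan's constant. -/
open MeasureTheory Real

theorem continuous_arctan_sq_div : Continuous fun t : ℝ => Real.arctan t ^ 2 / t := by
  have h : (fun t : ℝ => Real.arctan t ^ 2 / t) =
      fun t => Real.arctan t * dslope Real.arctan 0 t := by
    funext t
    rcases eq_or_ne t 0 with rfl | ht
    · simp
    · rw [dslope_of_ne _ ht, slope_def_field]
      simp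
      ring
  rw [h]
  refine Real.continuous_arctan.mul ?_
  rw [continuous_iff_continuousAt]
  intro t
  rcases eq_or_ne t 0 with rfl | ht
  · exact continuousAt_dslope_same.2 (Real.differentiable_arctan 0)
  · exact (continuousAt_dslope_of_ne ht).2 Real.continuous_arctan.continuousAt

theorem two_mul_sum_sin_odd_mul_sin (x : ℝ) (n : ℕ) :
    (∑ k ∈ Finset.range n, 2 * Real.sin ((2 * k + 1) * x)) * Real.sin x =
      1 - Real.cos (2 * n * x) := by
  induction n with
  | zero => simp
  | succ n ih =>
    rw [Finset.sum_range_succ, add_mul, ih]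
    push_cast
    have h1 : 2 * ((n : ℝ) + 1) * x = (2 * n + 1) * x + x := by ring
    have h2 : 2 * (n : ℝ) * x = (2 * n + 1) * x - x := by ring
    rw [h1, h2, Real.cos_add, Real.cos_sub]
    ring

theorem cos_odd_mul_pi_div_two (k : ℕ) : Real.cos ((2 * k + 1) * (π / 2)) = 0 := by
  rw [Real.cos_eq_zero_iff]
  exact ⟨k, by push_cast; ring⟩

theorem sin_odd_mul_pi_div_two (k : ℕ) : Real.sin ((2 * k + 1) * (π / 2)) = (-1) ^ k := by
  have h : (2 * (k : ℝ) + 1) * (π / 2) = π / 2 + k * π := by ring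
  rw [h, Real.sin_add_nat_mul_pi]
  simp

theorem integral_sq_mul_sin_odd (k : ℕ) :
    ∫ x in (0:ℝ)..(π / 2), x ^ 2 * Real.sin ((2 * k + 1) * x) =
      π * ((-1) ^ k / (2 * (k : ℝ) + 1) ^ 2) - 2 * (1 / (2 * (k : ℝ) + 1) ^ 3) := by
  set m : ℝ := 2 * k + 1 with hm
  have hm0 : m ≠ 0 := by positivity
  have hd : ∀ x : ℝ, HasDerivAt (fun x : ℝ => -(x ^ 2 * Real.cos (m * x)) / m +
      2 * (x * Real.sin (m * x)) / m ^ 2 + 2 * Real.cos (m * x) / m ^ 3)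
      (x ^ 2 * Real.sin (m * x)) x := by
    intro x
    have hl : HasDerivAt (fun x : ℝ => m * x) m x := by
      simpa using (hasDerivAt_id x).const_mul m
    have hs := hl.sin
    have hc := hl.cos
    have := ((((hasDerivAt_pow 2 x).mul hc).neg.div_const m).add
      ((((hasDerivAt_id x).mul hs).const_mul 2).div_const (m ^ 2))).add
      ((hc.const_mul 2).div_const (m ^ 3))
    convert! this using 1
    simp
    field_simp
    ring
  rw [intervalIntegral.integral_eq_sub_of_hasDerivAt (fun x _ => hd x)
    ((by fun_prop : Continuous fun x : ℝ => x ^ 2 * Real.sin (m * x)).intervalIntegrable _ _)]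
  rw [hm, cos_odd_mul_pi_div_two, sin_odd_mul_pi_div_two]
  simp
  field_simp

theorem tan_mul_cos_sq_half {x : ℝ} (hx : Real.cos (x / 2) ≠ 0) :
    Real.tan (x / 2) * Real.cos (x / 2) ^ 2 = Real.sin x / 2 := by
  have h : x = 2 * (x / 2) := by ring
  conv_rhs => rw [h, Real.sin_two_mul]
  rw [Real.tan_eq_sin_div_cos]
  field_simp

theorem cos_half_pos {x : ℝ} (hx : x ∈ Set.uIcc 0 (π / 2)) : 0 < Real.cos (x / 2) := by
  rw [Set.uIcc_of_le (by positivity)] at hx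
  exact Real.cos_pos_of_mem_Ioo ⟨by linarith [hx.1, pi_pos], by linarith [hx.2, pi_pos]⟩

theorem arctan_tan_half_integrand {x : ℝ} (hx : x ∈ Set.uIcc 0 (π / 2)) :
    Real.arctan (Real.tan (x / 2)) ^ 2 / Real.tan (x / 2) *
      (1 / Real.cos (x / 2) ^ 2 * (1 / 2)) = 1 / 4 * (x ^ 2 / Real.sin x) := by
  have hc := cos_half_pos hx
  rw [Set.uIcc_of_le (by positivity)] at hx
  rw [Real.arctan_tan (by linarith [hx.1, pi_pos]) (by linarith [hx.2, pi_pos])]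
  have h := tan_mul_cos_sq_half hc.ne'
  have h' : Real.sin x = 2 * (Real.tan (x / 2) * Real.cos (x / 2) ^ 2) := by linarith
  rw [h']
  rcases eq_or_ne (Real.tan (x / 2)) 0 with h0 | h0
  · simp [h0]
  · field_simp
    norm_num

theorem hasDerivAt_tan_half {x : ℝ} (hx : x ∈ Set.uIcc 0 (π / 2)) :
    HasDerivAt (fun x : ℝ => Real.tan (x / 2)) (1 / Real.cos (x / 2) ^ 2 * (1 / 2)) x :=
  HasDerivAt.comp (h₂ := Real.tan) x (Real.hasDerivAt_tan (cos_half_pos hx).ne')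
    ((hasDerivAt_id x).div_const 2)

theorem continuousOn_deriv_tan_half :
    ContinuousOn (fun x : ℝ => 1 / Real.cos (x / 2) ^ 2 * (1 / 2)) (Set.uIcc 0 (π / 2)) := by
  refine ContinuousOn.mul (ContinuousOn.div continuousOn_const (by fun_prop) ?_)
    continuousOn_const
  exact fun x hx => pow_ne_zero 2 (cos_half_pos hx).ne'

theorem continuousOn_sq_div_sin :
    ContinuousOn (fun x : ℝ => x ^ 2 / Real.sin x) (Set.uIcc 0 (π / 2)) := by
  have htan : ContinuousOn (fun x : ℝ => Real.tan (x / 2)) (Set.uIcc 0 (π / 2)) :=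
    fun x hx => (hasDerivAt_tan_half hx).continuousAt.continuousWithinAt
  have h := ((continuous_arctan_sq_div.comp_continuousOn htan).mul
    continuousOn_deriv_tan_half).const_mul 4
  refine h.congr fun x hx => ?_
  have := arctan_tan_half_integrand hx
  simp only [Pi.mul_apply, Function.comp_apply]
  rw [this]
  ring

theorem integral_arctan_sq_div :
    ∫ t in (0:ℝ)..1, Real.arctan t ^ 2 / t =
      1 / 4 * ∫ x in (0:ℝ)..(π / 2), x ^ 2 / Real.sin x := by
  have h := intervalIntegral.integral_comp_mul_deriv (a := 0) (b := π / 2)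
    (fun x hx => hasDerivAt_tan_half hx) continuousOn_deriv_tan_half continuous_arctan_sq_div
  have e : π / 2 / 2 = π / 4 := by ring
  simp only [zero_div, Real.tan_zero, e, Real.tan_pi_div_four] at h
  rw [← h, ← intervalIntegral.integral_const_mul]
  exact intervalIntegral.integral_congr fun x hx => arctan_tan_half_integrand hx

theorem tendsto_integral_cos_mul {f : ℝ → ℝ} {a b : ℝ} (hab : a ≤ b)
    (hf : IntervalIntegrable f volume a b) :
    Filter.Tendsto (fun n : ℕ => ∫ x in a..b, Real.cos (2 * n * x) * f x)
      Filter.atTop (nhds 0) := by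
  have hR := Real.tendsto_integral_exp_smul_cocompact
    ((Set.Ioc a b).indicator fun x => (f x : ℂ))
  have hw : Filter.Tendsto (fun n : ℕ => (n : ℝ) / π) Filter.atTop (Filter.cocompact ℝ) :=
    (tendsto_natCast_atTop_atTop.atTop_div_const pi_pos).mono_right atTop_le_cocompact
  have h := (Complex.continuous_re.tendsto 0).comp (hR.comp hw)
  rw [Complex.zero_re] at h
  refine h.congr fun n => ?_
  have hfc : IntegrableOn (fun x => (f x : ℂ)) (Set.Ioc a b) := hf.1.ofReal
  have e : (fun v : ℝ => Real.fourierChar (-(v * (n / π))) •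
      (Set.Ioc a b).indicator (fun x => (f x : ℂ)) v) =
      (Set.Ioc a b).indicator
        (fun v => Real.fourierChar (-(v * (n / π))) • (f v : ℂ)) := by
    funext v
    by_cases hv : v ∈ Set.Ioc a b <;> simp [hv]
  simp only [Function.comp_apply]
  rw [e, integral_indicator measurableSet_Ioc, intervalIntegral.integral_of_le hab,
    ← Complex.reCLM_apply, ← ContinuousLinearMap.integral_comp_comm]
  · refine integral_congr_ae (Filter.Eventually.of_forall fun v => ?_)
    have e2 : 2 * π * -(v * (n / π)) = -(2 * n * v) := by field_simp
    simp only [Complex.reCLM_apply, Circle.smul_def, Real.fourierChar_apply, smul_eq_mul,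
      Complex.re_mul_ofReal, e2, Complex.exp_ofReal_mul_I_re, Real.cos_neg]
  · have hc : Continuous fun v : ℝ => Real.fourierChar (-(v * (n / π))) :=
      Real.continuous_fourierChar.comp (by fun_prop)
    refine Integrable.mono hfc (hc.aestronglyMeasurable.smul hfc.aestronglyMeasurable) ?_
    exact Filter.Eventually.of_forall fun v => (Circle.norm_smul _ _).le

theorem integral_sq_div_sin_eq_sum_add (n : ℕ) :
    ∫ x in (0:ℝ)..(π / 2), x ^ 2 / Real.sin x =
      ∑ k ∈ Finset.range n, 2 * (π * ((-1) ^ k / (2 * (k : ℝ) + 1) ^ 2) -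
        2 * (1 / (2 * (k : ℝ) + 1) ^ 3)) +
      ∫ x in (0:ℝ)..(π / 2), Real.cos (2 * n * x) * (x ^ 2 / Real.sin x) := by
  simp_rw [← integral_sq_mul_sin_odd, ← intervalIntegral.integral_const_mul]
  have hi : ∀ k ∈ Finset.range n, IntervalIntegrable
      (fun x : ℝ => 2 * (x ^ 2 * Real.sin ((2 * k + 1) * x))) volume 0 (π / 2) :=
    fun k _ => Continuous.intervalIntegrable (by fun_prop) _ _
  rw [← intervalIntegral.integral_finsetSum hi, ← intervalIntegral.integral_add]
  · refine intervalIntegral.integral_congr fun x hx => ?_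
    rw [Set.uIcc_of_le (by positivity)] at hx
    rcases eq_or_lt_of_le hx.1 with rfl | h0
    · simp
    · have hs : Real.sin x ≠ 0 := (Real.sin_pos_of_pos_of_lt_pi h0
        (by linarith [hx.2, pi_pos])).ne'
      have h := two_mul_sum_sin_odd_mul_sin x n
      have e : ∑ k ∈ Finset.range n, 2 * (x ^ 2 * Real.sin ((2 * k + 1) * x)) =
          x ^ 2 * ∑ k ∈ Finset.range n, 2 * Real.sin ((2 * k + 1) * x) := by
        rw [Finset.mul_sum]
        exact Finset.sum_congr rfl fun k _ => by ring
      simp only [e]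
      rw [eq_div_of_mul_eq hs h]
      ring
  · exact Continuous.intervalIntegrable (by fun_prop) _ _
  · exact ContinuousOn.intervalIntegrable
      (ContinuousOn.mul (by fun_prop) continuousOn_sq_div_sin)

theorem summable_one_div_odd_pow {p : ℕ} (hp : 1 < p) :
    Summable fun n : ℕ => 1 / (2 * (n : ℝ) + 1) ^ p := by
  have h := (Real.summable_one_div_nat_pow.2 hp).comp_injective
    (i := fun n : ℕ => 2 * n + 1) (fun a b h => by simpa using h)
  simpa [Function.comp_def] using h

theorem tsum_one_div_odd_cube :
    ∑' n : ℕ, 1 / (2 * (n : ℝ) + 1) ^ 3 = 7 / 8 * ∑' n : ℕ, 1 / ((n : ℝ) + 1) ^ 3 := by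
  have hs : Summable fun n : ℕ => 1 / ((n : ℝ) + 1) ^ 3 := by
    simpa using (summable_nat_add_iff 1).2
      (Real.summable_one_div_nat_pow.2 (by norm_num : 1 < 3))
  have e : ∀ n : ℕ, 1 / (((2 * n + 1 : ℕ) : ℝ) + 1) ^ 3 = 1 / 8 * (1 / ((n : ℝ) + 1) ^ 3) := by
    intro n
    push_cast
    field_simp
    ring
  have h := tsum_even_add_odd (f := fun n : ℕ => 1 / ((n : ℝ) + 1) ^ 3)
    (by simpa using summable_one_div_odd_pow (by norm_num : 1 < 3))
    ((hs.mul_left (1 / 8)).congr fun n => (e n).symm)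
  simp_rw [e] at h
  rw [tsum_mul_left] at h
  push_cast at h
  linarith

theorem stmt18 :
    ∫ t in (0:ℝ)..1, (Real.arctan t) ^ 2 / t =
      (Real.pi / 2) * (∑' n : ℕ, (-1) ^ n / (2 * (n : ℝ) + 1) ^ 2) -
        (7 / 8) * ∑' n : ℕ, 1 / ((n : ℝ) + 1) ^ 3 := by
  have hG : Summable fun n : ℕ => (-1 : ℝ) ^ n / (2 * (n : ℝ) + 1) ^ 2 := by
    refine Summable.of_norm ((summable_one_div_odd_pow (by norm_num : 1 < 2)).congr fun n => ?_)
    simp [abs_of_nonneg (by positivity : (0 : ℝ) ≤ 2 * n + 1)]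
  have hsum := (((hG.hasSum.mul_left π).sub
    ((summable_one_div_odd_pow (by norm_num : 1 < 3)).hasSum.mul_left 2)).mul_left
      2).tendsto_sum_nat
  have hlim := hsum.add
    (tendsto_integral_cos_mul (by positivity) continuousOn_sq_div_sin.intervalIntegrable)
  have h := tendsto_nhds_unique
    (tendsto_const_nhds.congr integral_sq_div_sin_eq_sum_add) hlim
  rw [integral_arctan_sq_div, h, tsum_one_div_odd_cube]
  ring
end
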